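/- arXiv:2209.05820 — 2 statements merged into one kernel-verified Lean document; each statement's English description precedes it below -/
import Mathlib

section
/- If φ and φ' are order automorphisms of (D, ⊑) and φ(G) = φ'(G) for every G ∈ D with at most 12 vertices, then φ = φ'. -/
/-- A finite digraph: a finite nonempty vertex set `Fin n` with a (Bool-valued)
edge relation, loops allowed. -/
structure FinDigraph where
  n : ℕ
  pos : 0 < n
  adj : Fin n → Fin n → Bool

namespace FinDigraph

/-- Isomorphism of finite digraphs. -/
def Iso (G H : FinDigraph) : Prop :=
  ∃ e : Fin G.n ≃ Fin H.n, ∀ u v, H.adj (e u) (e v) = G.adj u v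

theorem iso_refl (G : FinDigraph) : Iso G G := ⟨Equiv.refl _, fun _ _ => rfl⟩

theorem iso_symm {G H : FinDigraph} (h : Iso G H) : Iso H G := by
  obtain ⟨e, he⟩ := h
  refine ⟨e.symm, fun u v => ?_⟩
  rw [← he (e.symm u) (e.symm v), e.apply_symm_apply, e.apply_symm_apply]

theorem iso_trans {G H K : FinDigraph} (hGH : Iso G H) (hHK : Iso H K) : Iso G K := by
  obtain ⟨e, he⟩ := hGH
  obtain ⟨f, hf⟩ := hHK
  exact ⟨e.trans f, fun u v => (hf (e u) (e v)).trans (he u v)⟩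

instance isoSetoid : Setoid FinDigraph :=
  ⟨Iso, iso_refl, fun h => iso_symm h, fun h h' => iso_trans h h'⟩

/-- `Emb G H` : `G` is isomorphic to an induced subdigraph of `H`. -/
def Emb (G H : FinDigraph) : Prop :=
  ∃ f : Fin G.n ↪ Fin H.n, ∀ u v, H.adj (f u) (f v) = G.adj u v

end FinDigraph

/-- `D`: the isomorphism classes of finite digraphs. -/
def D : Type := Quotient FinDigraph.isoSetoid

/-- The isomorphism class of a finite digraph. -/
def toD (G : FinDigraph) : D := Quotient.mk _ G

/-- The substructure (induced subdigraph) ordering `⊑` on `D`. -/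
instance : LE D :=
  ⟨fun x y => ∃ G H : FinDigraph, x = toD G ∧ y = toD H ∧ FinDigraph.Emb G H⟩

/-- An order automorphism: a bijection such that `x ≤ y ↔ f x ≤ f y`. -/
def IsOrderAuto {α : Type*} [LE α] (f : α → α) : Prop :=
  Function.Bijective f ∧ ∀ x y : α, x ≤ y ↔ f x ≤ f y

/-- φ₁ on digraphs: complement the loop status of every vertex. -/
def phi1Fn (G : FinDigraph) : FinDigraph :=
  ⟨G.n, G.pos, fun u v => if u = v then !(G.adj u v) else G.adj u v⟩

/-- Edge reversal: transpose the edge relation. -/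
def revFn (G : FinDigraph) : FinDigraph :=
  ⟨G.n, G.pos, fun u v => G.adj v u⟩

/-- φ₂ on digraphs: toggle both edges between distinct loopless vertices joined
by both or neither of the two possible edges. -/
def phi2Fn (G : FinDigraph) : FinDigraph :=
  ⟨G.n, G.pos, fun u v =>
    if u ≠ v ∧ G.adj u u = false ∧ G.adj v v = false ∧ G.adj u v = G.adj v u then
      !(G.adj u v)
    else G.adj u v⟩

/-- φ₃ on digraphs: toggle both edges between distinct looped vertices joined
by both or neither of the two possible edges. -/
def phi3Fn (G : FinDigraph) : FinDigraph :=
  ⟨G.n, G.pos, fun u v =>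
    if u ≠ v ∧ G.adj u u = true ∧ G.adj v v = true ∧ G.adj u v = G.adj v u then
      !(G.adj u v)
    else G.adj u v⟩

/-- φ₄ on digraphs: reverse the single edge between distinct loopless vertices
joined by exactly one of the two possible edges. -/
def phi4Fn (G : FinDigraph) : FinDigraph :=
  ⟨G.n, G.pos, fun u v =>
    if u ≠ v ∧ G.adj u u = false ∧ G.adj v v = false ∧ G.adj u v ≠ G.adj v u then
      G.adj v u
    else G.adj u v⟩

/-- φ₅ on digraphs: reverse the single edge between distinct looped vertices
joined by exactly one of the two possible edges. -/
def phi5Fn (G : FinDigraph) : FinDigraph :=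
  ⟨G.n, G.pos, fun u v =>
    if u ≠ v ∧ G.adj u u = true ∧ G.adj v v = true ∧ G.adj u v ≠ G.adj v u then
      G.adj v u
    else G.adj u v⟩

/-- φ_π on digraphs: for each ordered pair `(u,v)` of distinct vertices with a loop at
`u` and no loop at `v`, replace its type `(Adj(u,v), Adj(v,u)) : Bool × Bool` by `π`
applied to it; everything else is unchanged. -/
def phiPiFn (π : Equiv.Perm (Bool × Bool)) (G : FinDigraph) : FinDigraph :=
  ⟨G.n, G.pos, fun u v =>
    if u = v then G.adj u v
    else if G.adj u u = true ∧ G.adj v v = false then (π (G.adj u v, G.adj v u)).1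
    else if G.adj u u = false ∧ G.adj v v = true then (π (G.adj v u, G.adj u v)).2
    else G.adj u v⟩

/-- The number of vertices of an isomorphism class. -/
def nVerts : D → ℕ :=
  Quotient.lift (fun G : FinDigraph => G.n) (fun _ _ h => by
    obtain ⟨e, -⟩ := h
    simpa using Fintype.card_congr e)

/-- `Dn n`: the classes of digraphs with at most `n` vertices (first `n` levels). -/
def Dn (n : ℕ) : Set D := {x : D | nVerts x ≤ n}

theorem mem_Dn_succ {n : ℕ} {x : D} (h : x ∈ Dn n) : x ∈ Dn (n + 1) :=
  le_trans h (Nat.le_succ n)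

/-- The set of lower covers of `x` in `(D, ⊑)`. -/
def lcov (x : D) : Set D :=
  {y : D | y ≤ x ∧ y ≠ x ∧ ∀ z : D, y ≤ z → z ≤ x → z = y ∨ z = x}

/-- `scount x` = number of classes sharing the lower-cover set of `x`. -/
noncomputable def scount (x : D) : ℕ := Nat.card {y : D // lcov y = lcov x}

/-- `Hset m` = `{(l(G), s(G)) : G ∈ D with exactly m vertices}`. -/
def Hset (m : ℕ) : Set (Set D × ℕ) :=
  {p : Set D × ℕ | ∃ x : D, nVerts x = m ∧ p = (lcov x, scount x)}

/-- Element-wise action of a map of `Dn n` on a subset of `Dn n`. -/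
def setImage {n : ℕ} (φ : ↥(Dn n) → ↥(Dn n)) (S : Set D) : Set D :=
  {z : D | ∃ (y : D) (h : y ∈ Dn n), y ∈ S ∧ z = ↑(φ ⟨y, h⟩)}

/-- Element-wise action of a map of `Dn n` on a set of pairs `(S, k)`. -/
def HsetImage {n : ℕ} (φ : ↥(Dn n) → ↥(Dn n)) (A : Set (Set D × ℕ)) : Set (Set D × ℕ) :=
  {p : Set D × ℕ | ∃ q ∈ A, p = (setImage φ q.1, q.2)}

/-- The swap permutation `σ(a,b) = (b,a)` of `Bool × Bool`. -/
def sigmaSwap : Equiv.Perm (Bool × Bool) := Equiv.prodComm Bool Bool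

/-- Restrictions to `D₃` of order automorphisms of `(D, ⊑)`. -/
def Aut3D : Set (↥(Dn 3) → ↥(Dn 3)) :=
  {g | ∃ φ : D → D, IsOrderAuto φ ∧ ∀ x : ↥(Dn 3), (↑(g x) : D) = φ ↑x}

/-- Restrictions to `D₃` of order automorphisms of `D₄`. -/
def Aut3D4 : Set (↥(Dn 3) → ↥(Dn 3)) :=
  {g | ∃ ψ : ↥(Dn 4) → ↥(Dn 4), IsOrderAuto ψ ∧
    ∀ x : ↥(Dn 3), (↑(g x) : D) = ↑(ψ ⟨↑x, mem_Dn_succ x.2⟩)}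

/-- Restrictions to `D₃` of order automorphisms of `D₄`, as order isomorphisms of `D₃`. -/
def Aut3D4Iso : Set (↥(Dn 3) ≃o ↥(Dn 3)) :=
  {g | ∃ ψ : ↥(Dn 4) → ↥(Dn 4), IsOrderAuto ψ ∧
    ∀ x : ↥(Dn 3), ((g x : ↥(Dn 3)) : D) = ↑(ψ ⟨↑x, mem_Dn_succ x.2⟩)}

/-!
An automorphism `φ` fixing the small digraphs fixes every transitive tournament, which is determined
by its subdigraphs on three vertices. Take such a tournament as a frame for a digraph `r`: join the
vertices of `r` to it so that none of them is oriented towards a frame vertex, which keeps the frame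
recognizable, and label each of them by complementing its edges with one frame vertex. One labelled
vertex, and then two, are pinned down by small subdigraphs, so `φ` fixes every framed digraph.

If `φ` maps `r` to `s`, then `s`, like `r`, embeds in every framing of `r`. If `s` did not embed in
`r`, all these embeddings would use frame vertices; varying the pattern along which the frame is
joined to `r` then imposes incompatible adjacencies on `s`. Hence `s` embeds in `r` and equals it.
-/

open Function Finset

namespace FinDigraph

/-- The edge relation of a digraph on an arbitrary vertex type. -/
abbrev AdjRel (V : Type*) := V → V → Bool

variable {U V W X : Type*}

/-- `r` is isomorphic to an induced subdigraph of `s`: `FinDigraph.Emb` for arbitrary vertex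
types. -/
def Embeds (r : AdjRel V) (s : AdjRel W) : Prop :=
  ∃ f : V ↪ W, ∀ u v, s (f u) (f v) = r u v

local infix:50 " ≼ " => Embeds

theorem Embeds.refl (r : AdjRel V) : r ≼ r := ⟨.refl V, fun _ _ => rfl⟩

theorem Embeds.trans {q : AdjRel U} {r : AdjRel V} {s : AdjRel W} : q ≼ r → r ≼ s → q ≼ s :=
  fun ⟨f, hf⟩ ⟨g, hg⟩ => ⟨f.trans g, fun u v => (hg _ _).trans (hf u v)⟩

theorem onFun_embeds (s : AdjRel W) (f : V ↪ W) : (s on f) ≼ s := ⟨f, fun _ _ => rfl⟩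

theorem embeds_onFun_equiv (s : AdjRel W) (e : V ≃ W) : s ≼ (s on e) :=
  ⟨e.symm.toEmbedding, fun _ _ => by simp [onFun]⟩

/-! ### The order on isomorphism classes -/

theorem Iso.embeds {G H : FinDigraph} : Iso G H → G.adj ≼ H.adj :=
  fun ⟨e, he⟩ => ⟨e.toEmbedding, he⟩

theorem toD_eq_toD_iff {G H : FinDigraph} : toD G = toD H ↔ Iso G H :=
  ⟨Quotient.exact, fun h => Quotient.sound h⟩

theorem exists_toD_eq (x : D) : ∃ G, toD G = x := Quotient.exists_rep x

theorem toD_le_toD_iff {G H : FinDigraph} : toD G ≤ toD H ↔ G.adj ≼ H.adj := by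
  constructor
  · rintro ⟨G', H', hG, hH, hGH⟩
    exact (toD_eq_toD_iff.1 hG).embeds.trans (.trans hGH (toD_eq_toD_iff.1 hH.symm).embeds)
  · exact fun h => ⟨G, H, rfl, rfl, h⟩

theorem nVerts_le_of_le {x y : D} (h : x ≤ y) : nVerts x ≤ nVerts y := by
  obtain ⟨G, rfl⟩ := exists_toD_eq x
  obtain ⟨H, rfl⟩ := exists_toD_eq y
  obtain ⟨f, -⟩ := toD_le_toD_iff.1 h
  exact Fin.le_of_injective f f.injective

theorem eq_of_le_of_nVerts_eq {x y : D} (h : x ≤ y) (hn : nVerts x = nVerts y) : x = y := by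
  obtain ⟨G, rfl⟩ := exists_toD_eq x
  obtain ⟨H, rfl⟩ := exists_toD_eq y
  obtain ⟨f, hf⟩ := toD_le_toD_iff.1 h
  have hcard : Fintype.card (Fin G.n) = Fintype.card (Fin H.n) :=
    (Fintype.card_fin _).trans (hn.trans (Fintype.card_fin _).symm)
  have hbij := (Fintype.bijective_iff_injective_and_card f).2 ⟨f.injective, hcard⟩
  exact toD_eq_toD_iff.2 ⟨.ofBijective f hbij, hf⟩

instance : PartialOrder D where
  le_refl x := by
    obtain ⟨G, rfl⟩ := exists_toD_eq x
    exact toD_le_toD_iff.2 (.refl _)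
  le_trans x y z := by
    obtain ⟨G, rfl⟩ := exists_toD_eq x
    obtain ⟨H, rfl⟩ := exists_toD_eq y
    obtain ⟨K, rfl⟩ := exists_toD_eq z
    simpa only [toD_le_toD_iff] using Embeds.trans
  le_antisymm _ _ hxy hyx :=
    eq_of_le_of_nVerts_eq hxy ((nVerts_le_of_le hxy).antisymm (nVerts_le_of_le hyx))

theorem nVerts_strictMono : StrictMono nVerts := fun _ _ h =>
  (nVerts_le_of_le h.le).lt_of_ne fun hn => h.ne (eq_of_le_of_nVerts_eq h.le hn)

theorem nVerts_pos (x : D) : 0 < nVerts x := by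
  obtain ⟨G, rfl⟩ := exists_toD_eq x
  exact G.pos

/-- The isomorphism class of a digraph on an arbitrary finite nonempty vertex type. -/
noncomputable def isoClass [Fintype V] [Nonempty V] (r : AdjRel V) : D :=
  toD ⟨Fintype.card V, Fintype.card_pos, r on (Fintype.equivFin V).symm⟩

section IsoClass

variable [Fintype V] [Nonempty V] [Fintype W] [Nonempty W]

theorem nVerts_isoClass (r : AdjRel V) : nVerts (isoClass r) = Fintype.card V := rfl

theorem isoClass_le_toD_iff {r : AdjRel V} {G : FinDigraph} : isoClass r ≤ toD G ↔ r ≼ G.adj :=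
  toD_le_toD_iff.trans
    ⟨(embeds_onFun_equiv r _).trans, (onFun_embeds r (Equiv.toEmbedding _)).trans⟩

theorem isoClass_le_isoClass_iff {r : AdjRel V} {s : AdjRel W} :
    isoClass r ≤ isoClass s ↔ r ≼ s :=
  isoClass_le_toD_iff.trans
    ⟨fun h => h.trans (onFun_embeds s (Equiv.toEmbedding _)),
      fun h => h.trans (embeds_onFun_equiv s _)⟩

theorem Embeds.isoClass_eq {r : AdjRel V} {s : AdjRel W} (h : r ≼ s)
    (hcard : Fintype.card V = Fintype.card W) : isoClass r = isoClass s :=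
  eq_of_le_of_nVerts_eq (isoClass_le_isoClass_iff.2 h) hcard

theorem isoClass_adj_onFun_equiv {G : FinDigraph} (e : V ≃ Fin G.n) :
    isoClass (G.adj on e) = toD G :=
  eq_of_le_of_nVerts_eq (isoClass_le_toD_iff.2 (onFun_embeds G.adj e.toEmbedding))
    ((Fintype.card_congr e).trans (Fintype.card_fin _))

theorem exists_isoClass_eq {x : D} (hx : nVerts x = Fintype.card V) :
    ∃ r : AdjRel V, isoClass r = x := by
  obtain ⟨G, rfl⟩ := exists_toD_eq x
  exact ⟨_, isoClass_adj_onFun_equiv ((Fintype.equivFin V).trans (finCongr hx.symm))⟩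

end IsoClass

theorem exists_equiv_sum_apply_inl [Fintype V] [Fintype W] [Fintype X] (f : V ↪ X)
    (hcard : Fintype.card X = Fintype.card V + Fintype.card W) :
    ∃ e : V ⊕ W ≃ X, ∀ v, e (.inl v) = f v := by
  classical
  have hcompl : Fintype.card W = Fintype.card ↥(Set.range f)ᶜ := by
    rw [Fintype.card_compl_set, Set.card_range_of_injective f.injective, hcard]
    omega
  exact ⟨(Equiv.sumCongr (.ofInjective f f.injective) (Fintype.equivOfCardEq hcompl)).trans
    (Equiv.Set.sumCompl _), fun v => by simp⟩

theorem exists_isoClass_sum_eq [Fintype V] [Nonempty V] [Fintype W] {r : AdjRel V} {x : D}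
    (h : isoClass r ≤ x) (hx : nVerts x = Fintype.card V + Fintype.card W) :
    ∃ s : AdjRel (V ⊕ W), isoClass s = x ∧ (s on .inl) = r := by
  obtain ⟨G, rfl⟩ := exists_toD_eq x
  obtain ⟨f, hf⟩ := isoClass_le_toD_iff.1 h
  obtain ⟨e, he⟩ := exists_equiv_sum_apply_inl (W := W) f ((Fintype.card_fin _).trans hx)
  refine ⟨G.adj on e, isoClass_adj_onFun_equiv e, ?_⟩
  ext u v : 2
  simp only [onFun, he, hf]

theorem exists_lt_nVerts_eq {x : D} {n : ℕ} (hn : 0 < n) (hx : nVerts x = n + 1) :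
    ∃ y < x, nVerts y = n := by
  have : NeZero n := ⟨hn.ne'⟩
  obtain ⟨r, rfl⟩ := exists_isoClass_eq (V := Fin (n + 1)) (by simpa using hx)
  have hle : isoClass (r on Fin.castSuccEmb) ≤ isoClass r :=
    isoClass_le_isoClass_iff.2 (onFun_embeds r Fin.castSuccEmb)
  have hn' : nVerts (isoClass (r on Fin.castSuccEmb)) = n := by simp [nVerts_isoClass]
  refine ⟨_, hle.lt_of_ne fun h => ?_, hn'⟩
  rw [h] at hn'
  omega

/-! ### Automorphisms fixing the small digraphs -/

theorem nVerts_le_nVerts_apply {φ : D → D} (hφ : StrictMono φ) (x : D) :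
    nVerts x ≤ nVerts (φ x) := by
  induction hx : nVerts x generalizing x with
  | zero => exact Nat.zero_le _
  | succ n ih =>
    obtain rfl | hn := n.eq_zero_or_pos
    · exact nVerts_pos _
    · obtain ⟨y, hyx, hy⟩ := exists_lt_nVerts_eq hn hx
      exact (ih y hy).trans_lt (nVerts_strictMono (hφ hyx))

theorem nVerts_apply (φ : D ≃o D) (x : D) : nVerts (φ x) = nVerts x := by
  refine le_antisymm ?_ (nVerts_le_nVerts_apply φ.strictMono x)
  simpa using nVerts_le_nVerts_apply φ.symm.strictMono (φ x)

theorem le_apply_iff_of_fixed {φ : D ≃o D} {x y : D} (hy : φ y = y) : y ≤ φ x ↔ y ≤ x := by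
  conv_lhs => rw [← hy, φ.le_iff_le]

theorem embeds_iff_of_fixed [Fintype U] [Nonempty U] [Fintype V] [Nonempty V] [Fintype W]
    [Nonempty W] {φ : D ≃o D} {r : AdjRel V} {s : AdjRel W} (hrs : φ (isoClass r) = isoClass s)
    {q : AdjRel U} (hq : φ (isoClass q) = isoClass q) : q ≼ r ↔ q ≼ s := by
  rw [← isoClass_le_isoClass_iff, ← isoClass_le_isoClass_iff, ← hrs, le_apply_iff_of_fixed hq]

/-- `φ` fixes every class of digraphs with at most `n` vertices. -/
def FixesUpTo (n : ℕ) (φ : D ≃o D) : Prop := ∀ x, nVerts x ≤ n → φ x = x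

theorem FixesUpTo.mono {m n : ℕ} {φ : D ≃o D} (hφ : FixesUpTo n φ) (hmn : m ≤ n) :
    FixesUpTo m φ := fun x hx => hφ x (hx.trans hmn)

theorem FixesUpTo.symm {n : ℕ} {φ : D ≃o D} (hφ : FixesUpTo n φ) : FixesUpTo n φ.symm :=
  fun x hx => φ.symm_apply_eq.2 (hφ x hx).symm

/-- Every induced subdigraph of `s` on at most `n` vertices embeds in `r`. The embedding is
given as a map on all vertices that is only controlled on the subdigraph. -/
def LocallyEmbeds (n : ℕ) (s : AdjRel V) (r : AdjRel W) : Prop :=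
  ∀ A : Finset V, #A ≤ n →
    ∃ f : V → W, Set.InjOn f A ∧ ∀ u ∈ A, ∀ v ∈ A, r (f u) (f v) = s u v

theorem FixesUpTo.locallyEmbeds [Fintype V] [Nonempty V] [Fintype W] [Nonempty W] {n : ℕ}
    {φ : D ≃o D} (hφ : FixesUpTo n φ) {r : AdjRel V} {s : AdjRel W}
    (hrs : φ (isoClass r) = isoClass s) : LocallyEmbeds n s r := by
  classical
  intro A hA
  obtain rfl | hne := A.eq_empty_or_nonempty
  · exact ⟨fun _ => Classical.arbitrary V, by simp⟩
  have : Nonempty A := hne.to_subtype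
  have hfix : φ (isoClass (s on ((↑) : A → W))) = isoClass (s on ((↑) : A → W)) :=
    hφ _ (by simpa [nVerts_isoClass] using hA)
  obtain ⟨f, hf⟩ := (embeds_iff_of_fixed hrs hfix).2 (onFun_embeds s (.subtype (· ∈ A)))
  refine ⟨fun w => if hw : w ∈ A then f ⟨w, hw⟩ else Classical.arbitrary V, ?_, ?_⟩
  · intro u hu v hv huv
    simpa [mem_coe.1 hu, mem_coe.1 hv] using huv
  · intro u hu v hv
    simpa [hu, hv] using hf ⟨u, hu⟩ ⟨v, hv⟩

/-! ### Transitive tournaments -/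

/-- The transitive tournament on `Fin N`, with a loop at every vertex or at none. -/
def transTournament (l : Bool) (N : ℕ) : AdjRel (Fin N) :=
  fun i j => if i = j then l else decide (i < j)

theorem transTournament_self (l : Bool) {N : ℕ} (i : Fin N) : transTournament l N i i = l :=
  if_pos rfl

theorem transTournament_eq_true_iff {l : Bool} {N : ℕ} {i j : Fin N} (h : i ≠ j) :
    transTournament l N i j = true ↔ i < j := by
  rw [transTournament, if_neg h, decide_eq_true_iff]

theorem transTournament_onFun_strictMono (l : Bool) {k N : ℕ} {f : Fin k → Fin N}
    (hf : StrictMono f) : (transTournament l N on f) = transTournament l k := by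
  ext i j : 2
  simp only [onFun, transTournament, hf.injective.eq_iff, hf.lt_iff_lt]

/-- `x` and `y` have loop status `l` and are joined by exactly one of the two possible edges. -/
def Oriented (l : Bool) (s : AdjRel V) (x y : V) : Prop :=
  s x x = l ∧ s y y = l ∧ s x y ≠ s y x

theorem Oriented.symm {l : Bool} {s : AdjRel V} {x y : V} (h : Oriented l s x y) :
    Oriented l s y x := ⟨h.2.1, h.1, h.2.2.symm⟩

theorem Oriented.ne {l : Bool} {s : AdjRel V} {x y : V} (h : Oriented l s x y) : x ≠ y := by
  rintro rfl
  exact h.2.2 rfl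

theorem oriented_transTournament_iff {l : Bool} {N : ℕ} {i j : Fin N} :
    Oriented l (transTournament l N) i j ↔ i ≠ j := by
  refine ⟨Oriented.ne, fun h => ⟨transTournament_self l i, transTournament_self l j, ?_⟩⟩
  rw [Ne, Bool.eq_iff_iff, transTournament_eq_true_iff h, transTournament_eq_true_iff h.symm]
  omega

theorem oriented_of_onFun_eq {l : Bool} {s : AdjRel V} {N : ℕ} {t : Fin N → V}
    (ht : (s on t) = transTournament l N) {i j : Fin N} (hij : i ≠ j) :
    Oriented l s (t i) (t j) := by
  have := oriented_transTournament_iff (l := l).2 hij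
  rwa [← ht] at this

theorem embeds_of_locallyEmbeds_transTournament [Fintype X] {l : Bool} {s : AdjRel X} {N : ℕ}
    (hN : Fintype.card X = N) (hs : LocallyEmbeds 3 s (transTournament l N)) :
    transTournament l N ≼ s := by
  classical
  have loop x : s x x = l := by
    obtain ⟨f, -, hf⟩ := hs {x} (by simp)
    rw [← hf x (by simp) x (by simp), transTournament_self]
  let lt : X → X → Prop := fun x y => x ≠ y ∧ s x y = true
  have order_on_triple x y z : ∃ f : X → Fin N,
      ∀ u ∈ ({x, y, z} : Finset X), ∀ v ∈ ({x, y, z} : Finset X),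
        (u ≠ v ↔ f u ≠ f v) ∧ (lt u v ↔ f u < f v) := by
    obtain ⟨f, hinj, hf⟩ := hs {x, y, z} card_le_three
    refine ⟨f, fun u hu v hv => ⟨(hinj.eq_iff hu hv).not.symm, ?_⟩⟩
    by_cases huv : u = v
    · simp [lt, huv]
    · rw [← transTournament_eq_true_iff (l := l) ((hinj.eq_iff hu hv).not.2 huv), hf u hu v hv]
      exact and_iff_right huv
  have : IsStrictTotalOrder X lt :=
    { irrefl := fun x h => h.1 rfl
      trans := fun x y z hxy hyz => by
        obtain ⟨f, hf⟩ := order_on_triple x y z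
        rw [(hf _ (by simp) _ (by simp)).2] at hxy hyz ⊢
        exact hxy.trans hyz
      trichotomous := fun x y hxy hyx => by
        obtain ⟨f, hf⟩ := order_on_triple x y y
        rw [(hf _ (by simp) _ (by simp)).2] at hxy hyx
        by_contra hne
        exact (hf x (by simp) y (by simp)).1.1 hne (le_antisymm (not_lt.1 hyx) (not_lt.1 hxy)) }
  let : LinearOrder X := linearOrderOfSTO lt
  let e : Fin N ≃o X := Fintype.orderIsoFinOfCardEq X hN
  refine ⟨e.toEmbedding, fun i j => ?_⟩
  obtain rfl | hij := eq_or_ne i j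
  · exact (loop _).trans (transTournament_self l i).symm
  · rw [Bool.eq_iff_iff, transTournament_eq_true_iff hij, ← e.lt_iff_lt]
    exact (and_iff_right (e.injective.ne hij)).symm

theorem FixesUpTo.isoClass_transTournament {φ : D ≃o D} (hφ : FixesUpTo 3 φ) (l : Bool) (N : ℕ)
    [NeZero N] : φ (isoClass (transTournament l N)) = isoClass (transTournament l N) := by
  obtain ⟨s, hs⟩ := exists_isoClass_eq (V := Fin N) (x := φ (isoClass (transTournament l N)))
    (nVerts_apply φ _)
  have hemb := embeds_of_locallyEmbeds_transTournament (Fintype.card_fin N)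
    (hφ.locallyEmbeds hs.symm)
  rw [← hs, hemb.isoClass_eq rfl]

/-! ### Frames -/

/-- The left summand of `s` is a transitive tournament, and no vertex of the right summand is
oriented towards a vertex of it. Since every two vertices of the tournament are oriented, this
makes the tournament recognizable in `s`. -/
structure HasFrame (l : Bool) {N : ℕ} (s : AdjRel (Fin N ⊕ W)) : Prop where
  onFun_inl : (s on .inl) = transTournament l N
  not_oriented (w : W) (i : Fin N) : ¬ Oriented l s (.inr w) (.inl i)

theorem HasFrame.exists_strictMono [Fintype W] {l : Bool} {k N : ℕ} {s : AdjRel (Fin N ⊕ W)}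
    (hs : HasFrame l s) {t : Fin k → Fin N ⊕ W} (ht : (s on t) = transTournament l k)
    (hk : Fintype.card W < k) : ∃ f : Fin k → Fin N, StrictMono f ∧ ∀ i, t i = .inl (f i) := by
  obtain ⟨i₀, b, hi₀⟩ : ∃ i₀ b, t i₀ = .inl b := by
    by_contra! hcon
    have (i : Fin k) : ∃ w, t i = .inr w := by
      rcases h : t i with b | w
      exacts [absurd h (hcon i b), ⟨w, rfl⟩]
    choose w hw using this
    have hinj : Injective w := fun i j hij => by
      by_contra hne
      exact (oriented_of_onFun_eq ht hne).ne (by rw [hw, hw, hij])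
    simpa using hk.trans_le' (Fintype.card_le_of_injective w hinj)
  have (i : Fin k) : ∃ j, t i = .inl j := by
    obtain rfl | hi := eq_or_ne i i₀
    · exact ⟨b, hi₀⟩
    · rcases h : t i with j | w
      · exact ⟨j, rfl⟩
      · exact absurd (h ▸ hi₀ ▸ oriented_of_onFun_eq ht hi) (hs.not_oriented w b)
  choose f hf using this
  refine ⟨f, fun i j hij => ?_, hf⟩
  have hne : f i ≠ f j := fun h => (oriented_of_onFun_eq ht hij.ne).ne (by rw [hf, hf, h])
  have key : transTournament l N (f i) (f j) = transTournament l k i j := by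
    rw [← hs.onFun_inl, ← ht, onFun, onFun, hf, hf]
  rwa [← transTournament_eq_true_iff hne, key, transTournament_eq_true_iff hij.ne]

/-- The `k` frame vertices of the smaller digraph outnumber `W`, so one of them lands in the
larger frame and drags its whole frame along. -/
theorem HasFrame.embedding_eq_sumMap [Fintype W] {l : Bool} {k N : ℕ} {r : AdjRel (Fin k ⊕ U)}
    {s : AdjRel (Fin N ⊕ W)} (hr : HasFrame l r) (hs : HasFrame l s)
    (hk : Fintype.card W < k) {F : Fin k ⊕ U ↪ Fin N ⊕ W} (hF : ∀ u v, s (F u) (F v) = r u v) :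
    ∃ f : Fin k → Fin N, StrictMono f ∧ ∃ h : U ↪ W, ∀ u, F u = Sum.map f h u := by
  obtain ⟨f, hf, hFf⟩ := hs.exists_strictMono (t := fun i => F (.inl i))
    (by ext i j : 2; rw [← hr.onFun_inl]; exact hF _ _) hk
  have (u : U) : ∃ w, F (.inr u) = .inr w := by
    rcases hu : F (.inr u) with c | w
    · exfalso
      have hne : c ≠ f ⟨0, by omega⟩ := fun h => by
        rw [h, ← hFf] at hu
        simpa using F.injective hu
      have hor := oriented_of_onFun_eq hs.onFun_inl hne
      apply hr.not_oriented u ⟨0, by omega⟩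
      simpa only [Oriented, ← hF, hu, hFf] using hor
    · exact ⟨w, rfl⟩
  choose h hFh using this
  have hinj : Injective h := fun u v huv =>
    Sum.inr_injective (F.injective (by rw [hFh, hFh, huv]))
  exact ⟨f, hf, ⟨h, hinj⟩, Sum.rec hFf hFh⟩

theorem HasFrame.exists_eq_onFun_of_embeds [Fintype W] {l : Bool} {N : ℕ}
    {r : AdjRel (Fin N ⊕ U)} {s : AdjRel (Fin N ⊕ W)} (hr : (r on .inl) = transTournament l N)
    (hs : HasFrame l s) (hN : Fintype.card W < N) (hrs : r ≼ s) :
    ∃ h : U ↪ W, r = (s on Sum.map id h) := by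
  obtain ⟨F, hF⟩ := hrs
  obtain ⟨f, hf, hFf⟩ := hs.exists_strictMono (t := fun i => F (.inl i))
    (by ext i j : 2; rw [← hr]; exact hF _ _) hN
  have hFl (i : Fin N) : F (.inl i) = .inl i :=
    (hFf i).trans (congrArg _ (hf.apply_le.antisymm hf.le_apply))
  have (u : U) : ∃ w, F (.inr u) = .inr w := by
    rcases hu : F (.inr u) with i | w
    · exact absurd (F.injective (hu.trans (hFl i).symm)) Sum.inr_ne_inl
    · exact ⟨w, rfl⟩
  choose h hFr using this
  refine ⟨⟨h, fun u v huv => Sum.inr_injective (F.injective (by rw [hFr, hFr, huv]))⟩, ?_⟩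
  have hFmap (u) : F u = Sum.map id h u := by
    cases u
    exacts [hFl _, hFr _]
  ext u v : 2
  rw [← hF, hFmap, hFmap]
  rfl

theorem FixesUpTo.exists_isoClass_eq_onFun_inl [Fintype W] {φ : D ≃o D} (hφ : FixesUpTo 3 φ)
    {l : Bool} {N : ℕ} [NeZero N] {r : AdjRel (Fin N ⊕ W)}
    (hr : (r on .inl) = transTournament l N) :
    ∃ s : AdjRel (Fin N ⊕ W), φ (isoClass r) = isoClass s ∧ (s on .inl) = transTournament l N := by
  have hle : isoClass (transTournament l N) ≤ φ (isoClass r) := by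
    rw [le_apply_iff_of_fixed (hφ.isoClass_transTournament l N), isoClass_le_isoClass_iff, ← hr]
    exact onFun_embeds r .inl
  obtain ⟨s, hs, hsl⟩ := exists_isoClass_sum_eq (W := W) hle
    ((nVerts_apply φ _).trans (by simp [nVerts_isoClass]))
  exact ⟨s, hs.symm, hsl⟩

/-! ### Framed digraphs -/

/-- A rule for joining a vertex to a frame with loop status `loop`: the edges from and to the
frame depend only on the loop status of the vertex, up to reversing both at one frame vertex. The
last field keeps the vertex from being oriented towards the frame. -/
structure FramePattern where
  loop : Bool
  fromFrame : Bool → Bool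
  toFrame : Bool → Bool
  symm_at_loop : fromFrame loop = toFrame loop

/-- The edges from and to a frame vertex for a vertex with loop status `m`; `t` tells whether this
is the frame vertex at which they are complemented. -/
def FramePattern.link (P : FramePattern) (m t : Bool) : Bool × Bool :=
  (xor t (P.fromFrame m), xor t (P.toFrame m))

theorem FramePattern.link_injective (P : FramePattern) (m : Bool) : Injective (P.link m) :=
  fun _ _ h => Bool.xor_left_inj.1 (congrArg Prod.fst h)

/-- The digraph `g` together with a transitive tournament on `Fin N`, each vertex `w` of `g` being
joined to it according to `P` and labelled by the frame vertex `p w` where the link is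
complemented. -/
def framed (P : FramePattern) {N : ℕ} (g : AdjRel W) (p : W → Fin N) : AdjRel (Fin N ⊕ W)
  | .inl i, .inl j => transTournament P.loop N i j
  | .inl i, .inr w => (P.link (g w w) (decide (p w = i))).1
  | .inr w, .inl i => (P.link (g w w) (decide (p w = i))).2
  | .inr v, .inr w => g v w

/-- A framed digraph with a single vertex, with loop status `m` and label `i`. -/
def marked (P : FramePattern) {N : ℕ} (m : Bool) (i : Fin N) : AdjRel (Fin N ⊕ Unit) :=
  framed P (fun _ _ => m) fun _ => i

theorem marked_injective (P : FramePattern) (N : ℕ) (m : Bool) :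
    Injective (marked P m : Fin N → AdjRel (Fin N ⊕ Unit)) := fun i j h => by
  have : P.link m (decide (i = i)) = P.link m (decide (j = i)) :=
    Prod.ext (congrFun₂ h (.inl i) (.inr ())) (congrFun₂ h (.inr ()) (.inl i))
  simpa [eq_comm] using P.link_injective m this

theorem hasFrame_framed (P : FramePattern) {N : ℕ} (g : AdjRel W) (p : W → Fin N) :
    HasFrame P.loop (framed P g p) where
  onFun_inl := rfl
  not_oriented w i := by
    rintro ⟨hw, -, h⟩
    change g w w = P.loop at hw
    simp only [framed, FramePattern.link, hw, P.symm_at_loop, ne_eq, not_true_eq_false] at h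

theorem framed_onFun_sumMap (P : FramePattern) {k N : ℕ} {f : Fin k → Fin N} (hf : StrictMono f)
    {g : AdjRel W} {p : W → Fin N} {q : U → Fin k} {h : U → W} (hq : ∀ u, p (h u) = f (q u)) :
    (framed P g p on Sum.map f h) = framed P (g on h) q := by
  ext (i | u) (j | v) : 2
  · exact congrFun₂ (transTournament_onFun_strictMono P.loop hf) i j
  all_goals simp [onFun, framed, hq, hf.injective.eq_iff]

theorem framed_embeds_framed_iff [Fintype W] (P : FramePattern) {k N : ℕ} {r : AdjRel U}
    {s : AdjRel W} {q : U → Fin k} {p : W → Fin N} (hk : Fintype.card W < k) :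
    framed P r q ≼ framed P s p ↔ ∃ f : Fin k → Fin N, StrictMono f ∧
      ∃ h : U ↪ W, (s on h) = r ∧ ∀ u, p (h u) = f (q u) := by
  constructor
  · rintro ⟨F, hF⟩
    obtain ⟨f, hf, h, hFfh⟩ := (hasFrame_framed ..).embedding_eq_sumMap (hasFrame_framed ..) hk hF
    simp only [hFfh] at hF
    obtain rfl : (s on h) = r := funext₂ fun u v => hF (.inr u) (.inr v)
    refine ⟨f, hf, h, rfl, fun u => ?_⟩
    have : P.link (s (h u) (h u)) (decide (p (h u) = f (q u))) =
        P.link (s (h u) (h u)) (decide (q u = q u)) :=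
      Prod.ext (hF (.inl (q u)) (.inr u)) (hF (.inr u) (.inl (q u)))
    simpa using P.link_injective _ this
  · rintro ⟨f, hf, h, rfl, hq⟩
    rw [← framed_onFun_sumMap P hf hq]
    exact onFun_embeds _ ⟨_, hf.injective.sumMap h.injective⟩

theorem framed_onFun_sumMap_id (P : FramePattern) {N : ℕ} (g : AdjRel W) (p : W → Fin N)
    (h : U → W) : (framed P g p on Sum.map id h) = framed P (g on h) (p ∘ h) :=
  framed_onFun_sumMap P strictMono_id fun _ => rfl

/-! ### A single labelled vertex -/

theorem oriented_iff_of_adj_eq {l : Bool} {r : AdjRel V} {s : AdjRel W} {A : Finset V} {f : V → W}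
    (hf : ∀ u ∈ A, ∀ v ∈ A, s (f u) (f v) = r u v) {u v : V} (hu : u ∈ A) (hv : v ∈ A) :
    Oriented l s (f u) (f v) ↔ Oriented l r u v := by
  simp only [Oriented, hf u hu, hf v hv, hu, hv]

theorem HasFrame.exists_eq_inl_of_oriented {l : Bool} {N : ℕ} {s : AdjRel (Fin N ⊕ Unit)}
    (hs : HasFrame l s) {x y : Fin N ⊕ Unit} (h : Oriented l s x y) : ∃ i, x = .inl i := by
  obtain i | u := x
  · exact ⟨i, rfl⟩
  · obtain j | v := y
    exacts [absurd h (hs.not_oriented u j), absurd rfl h.ne]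

/-- If the extra vertex of `s` were oriented towards one frame vertex, it would be oriented
towards all of them, and `s` would not contain the extra vertex of `r` next to a frame vertex. -/
theorem HasFrame.of_locallyEmbeds {l : Bool} {N : ℕ} {r s : AdjRel (Fin N ⊕ Unit)}
    (hr : HasFrame l r) (hs : (s on .inl) = transTournament l N) (hrs : LocallyEmbeds 3 r s)
    (hsr : LocallyEmbeds 3 s r) : HasFrame l s := by
  refine ⟨hs, fun u i hi => ?_⟩
  have oriented_inr (j : Fin N) : Oriented l s (.inr u) (.inl j) := by
    obtain rfl | hij := eq_or_ne i j
    · exact hi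
    obtain ⟨f, hinj, hf⟩ := hsr {.inr u, .inl i, .inl j} card_le_three
    have hfi := (oriented_iff_of_adj_eq hf (by simp) (by simp)).2 hi
    have hfij := (oriented_iff_of_adj_eq hf (by simp) (by simp)).2 (oriented_of_onFun_eq hs hij)
    obtain ⟨c, hc⟩ := hr.exists_eq_inl_of_oriented hfi
    obtain ⟨d, hd⟩ := hr.exists_eq_inl_of_oriented hfij.symm
    have hcd : c ≠ d := by
      rintro rfl
      exact Sum.inr_ne_inl (hinj (by simp) (by simp) (hc.trans hd.symm))
    rw [← oriented_iff_of_adj_eq hf (by simp) (by simp), hc, hd]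
    exact oriented_of_onFun_eq hr.onFun_inl hcd
  have oriented_of_ne : ∀ x y, x ≠ y → Oriented l s x y
    | .inl _, .inl _, h => oriented_of_onFun_eq hs fun h' => h (congrArg _ h')
    | .inl j, .inr _, _ => (oriented_inr j).symm
    | .inr _, .inl j, _ => oriented_inr j
    | .inr _, .inr _, h => absurd rfl h
  obtain ⟨f, hinj, hf⟩ := hrs {.inr u, .inl i} (card_le_two.trans (by norm_num))
  refine hr.not_oriented u i ((oriented_iff_of_adj_eq hf (by simp) (by simp)).1 ?_)
  exact oriented_of_ne _ _ fun h => Sum.inr_ne_inl (hinj (by simp) (by simp) h)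

theorem HasFrame.exists_ne_adj_eq {l : Bool} {N : ℕ} {r s : AdjRel (Fin N ⊕ Unit)}
    (hr : HasFrame l r) (hs : HasFrame l s) (hrs : LocallyEmbeds 3 r s) {a b : Fin N}
    (hab : a ≠ b) :
    ∃ c d, c ≠ d ∧ s (.inr ()) (.inr ()) = r (.inr ()) (.inr ()) ∧
      s (.inl c) (.inr ()) = r (.inl a) (.inr ()) ∧
      s (.inr ()) (.inl c) = r (.inr ()) (.inl a) ∧
      s (.inl d) (.inr ()) = r (.inl b) (.inr ()) ∧
      s (.inr ()) (.inl d) = r (.inr ()) (.inl b) := by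
  obtain ⟨f, hinj, hf⟩ := hrs {.inr (), .inl a, .inl b} card_le_three
  have hfab := (oriented_iff_of_adj_eq hf (by simp) (by simp)).2
    (oriented_of_onFun_eq hr.onFun_inl hab)
  obtain ⟨c, hc⟩ := hs.exists_eq_inl_of_oriented hfab
  obtain ⟨d, hd⟩ := hs.exists_eq_inl_of_oriented hfab.symm
  have hcd : c ≠ d := fun h => hfab.ne (by rw [hc, hd, h])
  have hfr : f (.inr ()) = .inr () := by
    rcases he : f (.inr ()) with e | _
    · have hec : e ≠ c := by
        rintro rfl
        exact Sum.inr_ne_inl (hinj (by simp) (by simp) (he.trans hc.symm))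
      refine absurd ((oriented_iff_of_adj_eq hf (by simp) (by simp)).1 ?_) (hr.not_oriented () a)
      rw [he, hc]
      exact oriented_of_onFun_eq hs.onFun_inl hec
    · rfl
  simp only [mem_insert, mem_singleton, forall_eq_or_imp, forall_eq, hfr, hc, hd] at hf
  obtain ⟨⟨hrr, hra, hrb⟩, ⟨har, -⟩, hbr, -⟩ := hf
  exact ⟨c, d, hcd, hrr, har, hra, hbr, hrb⟩

theorem exists_eq_marked_of_locallyEmbeds {P : FramePattern} {N : ℕ} (hN : 2 ≤ N) {m : Bool}
    {i : Fin N} {s : AdjRel (Fin N ⊕ Unit)} (hs : (s on .inl) = transTournament P.loop N)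
    (hms : LocallyEmbeds 3 (marked P m i) s) (hsm : LocallyEmbeds 3 s (marked P m i)) :
    ∃ j, s = marked P m j := by
  have hframe : HasFrame P.loop (marked P m i) := hasFrame_framed ..
  have hframe' := hframe.of_locallyEmbeds hs hms hsm
  have : Nontrivial (Fin N) := Fin.nontrivial_iff_two_le.2 hN
  obtain ⟨b, hb⟩ := exists_ne i
  obtain ⟨j, -, -, hloop, hj, hj', -⟩ := hframe.exists_ne_adj_eq hframe' hms hb.symm
  have link_eq (k : Fin N) :
      (s (.inl k) (.inr ()), s (.inr ()) (.inl k)) = P.link m (decide (j = k)) := by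
    obtain rfl | hjk := eq_or_ne j k
    · simp [hj, hj', marked, framed]
    · obtain ⟨c, d, hcd, -, hc, hc', hd, hd'⟩ := hframe'.exists_ne_adj_eq hframe hsm hjk
      have hic : i = c := by
        have : P.link m (decide (i = c)) = P.link m true := Prod.ext
          (hc.trans (hj.trans (by simp [marked, framed])))
          (hc'.trans (hj'.trans (by simp [marked, framed])))
        simpa using P.link_injective m this
      have hid : i ≠ d := hic ▸ hcd
      rw [← hd, ← hd']
      simp [marked, framed, hid, hjk]
  refine ⟨j, ?_⟩
  ext (k | _) (k' | _) : 2
  · exact congrFun₂ hs k k'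
  · exact congrArg Prod.fst (link_eq k)
  · exact congrArg Prod.snd (link_eq k')
  · exact hloop

theorem le_and_add_le_of_strictMono {k N : ℕ} {f : Fin k → Fin N} (hf : StrictMono f)
    (a : Fin k) : (a : ℕ) ≤ f a ∧ k + f a ≤ N + a := by
  have hlt := card_le_card_of_injOn f (s := Iio a) (t := Iio (f a))
    (fun b hb => by simpa using hf (by simpa using hb)) hf.injective.injOn
  have hgt := card_le_card_of_injOn f (s := Ioi a) (t := Ioi (f a))
    (fun b hb => by simpa using hf (by simpa using hb)) hf.injective.injOn
  simp only [Fin.card_Iio, Fin.card_Ioi] at hlt hgt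
  omega

theorem marked_embeds_marked_iff {P : FramePattern} {m : Bool} {k N : ℕ} (hk : 1 < k)
    {a : Fin k} {i : Fin N} :
    marked P m a ≼ marked P m i ↔ (a : ℕ) ≤ i ∧ k + i ≤ N + a := by
  rw [marked, marked, framed_embeds_framed_iff P (by simpa)]
  constructor
  · rintro ⟨f, hf, -, -, hfa⟩
    exact hfa () ▸ le_and_add_le_of_strictMono hf a
  · rintro ⟨hai, hki⟩
    refine ⟨fun t => ⟨t + (i - a), by omega⟩, fun s t hst => Fin.mk_lt_mk.2 (by omega), .refl _,
      rfl, fun _ => Fin.ext ?_⟩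
    simp only
    omega

theorem FixesUpTo.isoClass_marked {φ : D ≃o D} (hφ : FixesUpTo 3 φ) (P : FramePattern) {N : ℕ}
    (m : Bool) (i : Fin N) : φ (isoClass (marked P m i)) = isoClass (marked P m i) := by
  induction N using Nat.strong_induction_on with
  | h N ih =>
    have : NeZero N := ⟨i.pos.ne'⟩
    obtain hN | hN := le_or_gt N 2
    · exact hφ _ (by simpa [nVerts_isoClass, Nat.lt_succ_iff] using hN)
    obtain ⟨s, hs, hsl⟩ := hφ.exists_isoClass_eq_onFun_inl (r := marked P m i) rfl
    obtain ⟨j, rfl⟩ := exists_eq_marked_of_locallyEmbeds hN.le hsl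
      (hφ.symm.locallyEmbeds (φ.symm_apply_eq.2 hs.symm)) (hφ.locallyEmbeds hs)
    have same_bounds (k a : ℕ) (hk : 1 < k) (hkN : k < N) (ha : a < k) :
        a ≤ i ∧ k + i ≤ N + a ↔ a ≤ j ∧ k + j ≤ N + a := by
      have := embeds_iff_of_fixed hs (ih k hkN ⟨a, ha⟩)
      rwa [marked_embeds_marked_iff hk, marked_embeds_marked_iff hk] at this
    have hij : i = j := by
      have := same_bounds 2 0 (by omega) hN (by omega)
      have := same_bounds (i + 1) i
      have := same_bounds (j + 1) j
      omega
    rw [hs, hij]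

/-! ### Framed digraphs with several vertices -/

theorem FixesUpTo.exists_onFun_eq_marked [Fintype W] {φ : D ≃o D} (hφ : FixesUpTo 3 φ)
    {P : FramePattern} {N : ℕ} [NeZero N] {g : AdjRel W} {p : W → Fin N}
    (hN : Fintype.card W < N) {s : AdjRel (Fin N ⊕ W)}
    (hs : φ (isoClass (framed P g p)) = isoClass s)
    (hsl : (s on .inl) = transTournament P.loop N) (w : W) :
    ∃ v, (s on Sum.map id fun _ : Unit => w) = marked P (g v v) (p v) := by
  have hN' : Fintype.card Unit < N :=
    (Fintype.card_le_of_injective (fun _ => w) (injective_of_subsingleton _)).trans_lt hN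
  set s₁ := s on Sum.map id fun _ : Unit => w
  have hs₁ : s₁ ≼ s := onFun_embeds s ⟨_, injective_id.sumMap (injective_of_subsingleton _)⟩
  obtain ⟨r, hr, hrl⟩ := hφ.symm.exists_isoClass_eq_onFun_inl (r := s₁) hsl
  have hrg : r ≼ framed P g p := by
    rw [← isoClass_le_isoClass_iff, ← hr, φ.symm_apply_le, hs]
    exact isoClass_le_isoClass_iff.2 hs₁
  obtain ⟨h, rfl⟩ := HasFrame.exists_eq_onFun_of_embeds hrl (hasFrame_framed ..) hN hrg
  rw [framed_onFun_sumMap_id] at hr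
  change φ.symm (isoClass s₁) = isoClass (marked P (g (h ()) (h ())) (p (h ()))) at hr
  have hle : s₁ ≼ marked P (g (h ()) (h ())) (p (h ())) := by
    rw [← isoClass_le_isoClass_iff, ← hφ.isoClass_marked, ← φ.symm_apply_le]
    exact hr.le
  obtain ⟨h', hh'⟩ := HasFrame.exists_eq_onFun_of_embeds (s := marked P _ _) (r := s₁) hsl
    (hasFrame_framed ..) hN' hle
  exact ⟨h (), hh'.trans (framed_onFun_sumMap_id ..)⟩

theorem FixesUpTo.exists_isoClass_framed_eq [Fintype W] {φ : D ≃o D} (hφ : FixesUpTo 3 φ)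
    (P : FramePattern) {N : ℕ} [NeZero N] (g : AdjRel W) {p : W → Fin N} (hp : Injective p)
    (hN : Fintype.card W < N) :
    ∃ g' : AdjRel W, (∀ w, g' w w = g w w) ∧
      φ (isoClass (framed P g p)) = isoClass (framed P g' p) := by
  obtain ⟨s, hs, hsl⟩ := hφ.exists_isoClass_eq_onFun_inl (r := framed P g p) rfl
  have hsframe : HasFrame P.loop s := by
    refine ⟨hsl, fun w i => ?_⟩
    obtain ⟨v, hv⟩ := hφ.exists_onFun_eq_marked hN hs hsl w
    have : HasFrame P.loop (s on Sum.map id fun _ : Unit => w) := hv ▸ hasFrame_framed ..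
    exact this.not_oriented () i
  have (w : W) : ∃ v, marked P (g w w) (p w) = (s on Sum.map id fun _ : Unit => v) := by
    have hle : marked P (g w w) (p w) ≼ framed P g p := by
      have := onFun_embeds (framed P g p)
        ⟨Sum.map id fun _ : Unit => w, injective_id.sumMap (injective_of_subsingleton _)⟩
      rwa [Embedding.coeFn_mk, framed_onFun_sumMap_id] at this
    rw [embeds_iff_of_fixed hs (hφ.isoClass_marked P _ _)] at hle
    obtain ⟨h, hh⟩ := HasFrame.exists_eq_onFun_of_embeds rfl hsframe hN hle
    exact ⟨h (), hh⟩
  choose K hK using this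
  have hloop (w : W) : s (.inr (K w)) (.inr (K w)) = g w w :=
    (congrFun₂ (hK w) (.inr ()) (.inr ())).symm
  have hKinj : Injective K := fun v w hvw => by
    have : marked P (g v v) (p v) = marked P (g w w) (p w) := by rw [hK, hK, hvw]
    rw [← hloop, ← hloop, hvw] at this
    exact hp (marked_injective P N _ this)
  refine ⟨s on .inr ∘ K, hloop, ?_⟩
  have : (s on Sum.map id K) = framed P (s on .inr ∘ K) p := by
    ext (i | v) (j | w) : 2
    · exact congrFun₂ hsl i j
    · exact (congrFun₂ (hK w) (.inl i) (.inr ())).symm.trans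
        (by simp [marked, framed, onFun, hloop])
    · exact (congrFun₂ (hK v) (.inr ()) (.inl j)).symm.trans
        (by simp [marked, framed, onFun, hloop])
    · rfl
  rw [hs, ← this]
  exact ((onFun_embeds s ⟨_, injective_id.sumMap hKinj⟩).isoClass_eq rfl).symm

theorem FixesUpTo.isoClass_framed_pair {φ : D ≃o D} (hφ : FixesUpTo 5 φ) (P : FramePattern)
    {N : ℕ} [NeZero N] (g : AdjRel (Fin 2)) {p : Fin 2 → Fin N} {i : Fin N} (h₀₁ : p 0 < p 1)
    (h₁ : p 1 < i) : φ (isoClass (framed P g p)) = isoClass (framed P g p) := by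
  have hp : StrictMono p := Fin.strictMono_iff_lt_succ.2 (by simpa [Fin.forall_fin_one])
  have hf : StrictMono ![p 0, p 1, i] :=
    Fin.strictMono_iff_lt_succ.2 (by simpa [Fin.forall_fin_two] using ⟨h₀₁, h₁⟩)
  obtain ⟨g', -, hg'⟩ := (hφ.mono (by norm_num)).exists_isoClass_framed_eq P g hp.injective
    (by simp only [Fintype.card_fin]; omega)
  have hemb : framed P g (Fin.castSucc : Fin 2 → Fin 3) ≼ framed P g' p := by
    rw [← embeds_iff_of_fixed hg' (hφ _ (by simp [nVerts_isoClass])),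
      framed_embeds_framed_iff P (by simp)]
    exact ⟨_, hf, .refl _, rfl, by simp [Fin.forall_fin_two]⟩
  obtain ⟨f', hf', h, rfl, hpf⟩ := (framed_embeds_framed_iff P (by simp)).1 hemb
  have hh : ⇑h = id := by
    have : StrictMono h := fun u v huv => by
      rw [← hp.lt_iff_lt, hpf, hpf]
      exact hf' (Fin.castSucc_lt_castSucc_iff.2 huv)
    exact funext fun u => this.apply_le.antisymm this.le_apply
  rw [hg', hh]
  rfl

theorem FixesUpTo.isoClass_framed [Fintype W] {φ : D ≃o D} (hφ : FixesUpTo 5 φ)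
    (P : FramePattern) {N : ℕ} [NeZero N] (g : AdjRel W) {p : W → Fin N} (hp : Injective p)
    (hpN : ∀ w, ∃ i, p w < i) (hN : Fintype.card W < N) :
    φ (isoClass (framed P g p)) = isoClass (framed P g p) := by
  obtain ⟨g', hdiag, hg'⟩ :=
    (hφ.mono (by norm_num)).exists_isoClass_framed_eq P g hp hN
  have eq_on_pair {v w : W} (hvw : p v < p w) : g' v w = g v w ∧ g' w v = g w v := by
    obtain ⟨i, hi⟩ := hpN w
    let h : Fin 2 ↪ W := ⟨![v, w], by simpa [Fin.cons_injective_iff] using ne_of_apply_ne p hvw.ne⟩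
    have hfix := hφ.isoClass_framed_pair P (g on h) (p := p ∘ h) hvw hi
    have hemb : framed P (g on h) (p ∘ h) ≼ framed P g p :=
      (framed_embeds_framed_iff P hN).2 ⟨id, strictMono_id, h, rfl, fun _ => rfl⟩
    obtain ⟨f, hf, h', hgh, hpf⟩ :=
      (framed_embeds_framed_iff P hN).1 ((embeds_iff_of_fixed hg' hfix).1 hemb)
    have hh (u) : h' u = h u := hp ((hpf u).trans (hf.apply_le.antisymm hf.le_apply))
    have key (u u') : g' (h u) (h u') = g (h u) (h u') := by
      simpa only [onFun, hh] using congrFun₂ hgh u u'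
    exact ⟨key 0 1, key 1 0⟩
  have : g' = g := by
    ext v w : 2
    rcases lt_trichotomy (p v) (p w) with h | h | h
    · exact (eq_on_pair h).1
    · rw [hp h, hdiag]
    · exact (eq_on_pair h).2
  rw [hg', this]

/-! ### Removing the frame -/

/-- The abstract properties of the set of vertices of `s` that an embedding into a digraph framed
along `P` sends into the frame. The exceptional `y₀` is the vertex labelled by the image of `x`. -/
def IsFrameTrace (P : FramePattern) (s : AdjRel V) (S : Set V) : Prop :=
  (∀ x ∈ S, s x x = P.loop) ∧
    ∀ x ∈ S, ∃ y₀, ∀ y ∉ S, y ≠ y₀ → s x y = P.fromFrame (s y y) ∧ s y x = P.toFrame (s y y)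

theorem exists_isFrameTrace_of_embeds_framed {P : FramePattern} {N : ℕ} {r : AdjRel W}
    {p : W → Fin N} (hp : Injective p) {s : AdjRel V} (hs : s ≼ framed P r p) (hsr : ¬ s ≼ r) :
    ∃ S : Set V, S.Nonempty ∧ IsFrameTrace P s S := by
  obtain ⟨F, hF⟩ := hs
  refine ⟨F ⁻¹' Set.range .inl, ?_, ?_, ?_⟩
  · by_contra! hempty
    have (v : V) : ∃ w, F v = .inr w := by
      rcases hv : F v with i | w
      · exact absurd (show F v ∈ Set.range .inl from hv ▸ Set.mem_range_self i)
          (Set.eq_empty_iff_forall_notMem.1 hempty v)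
      · exact ⟨w, rfl⟩
    choose h hh using this
    refine hsr ⟨⟨h, fun u v huv => F.injective (by rw [hh, hh, huv])⟩, fun u v => ?_⟩
    rw [← hF, hh, hh]
    rfl
  · rintro x ⟨i, hi⟩
    rw [← hF, ← hi]
    exact transTournament_self P.loop i
  · rintro x ⟨i, hi⟩
    obtain ⟨y₀, hy₀⟩ : ∃ y₀, ∀ y w, F y = .inr w → p w = i → y = y₀ := by
      by_cases h : ∃ y₀ w, F y₀ = .inr w ∧ p w = i
      · obtain ⟨y₀, w₀, hy₀, hw₀⟩ := h
        exact ⟨y₀, fun y w hy hw => F.injective (by rw [hy, hy₀, hp (hw.trans hw₀.symm)])⟩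
      · exact ⟨x, fun y w hy hw => absurd ⟨y, w, hy, hw⟩ h⟩
    refine ⟨y₀, fun y hy hne => ?_⟩
    rcases hFy : F y with j | w
    · exact absurd (show F y ∈ Set.range .inl from hFy ▸ Set.mem_range_self j) hy
    · have hpw : p w ≠ i := fun h => hne (hy₀ y w hFy h)
      simp only [← hF, ← hi, hFy, framed, FramePattern.link, decide_eq_false hpw, Bool.false_xor,
        and_self]

theorem IsFrameTrace.exists_adj_eq_of_mem_inter {P Q : FramePattern} {s : AdjRel V} {S T : Set V}
    (hS : IsFrameTrace P s S) (hT : IsFrameTrace Q s T) {x : V} (hxS : x ∈ S) (hxT : x ∈ T)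
    {B : Finset V} (hB : 2 < #B) (hBS : ∀ y ∈ B, y ∉ S) (hBT : ∀ y ∈ B, y ∉ T) :
    ∃ y ∈ B, P.fromFrame (s y y) = Q.fromFrame (s y y) ∧ P.toFrame (s y y) = Q.toFrame (s y y) := by
  classical
  obtain ⟨y₁, hy₁⟩ := hS.2 x hxS
  obtain ⟨y₂, hy₂⟩ := hT.2 x hxT
  obtain ⟨y, hy, hne⟩ := exists_mem_notMem_of_card_lt_card (s := {y₁, y₂}) (card_le_two.trans_lt hB)
  simp only [mem_insert, mem_singleton, not_or] at hne
  obtain ⟨h₁, h₁'⟩ := hy₁ y (hBS y hy) hne.1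
  obtain ⟨h₂, h₂'⟩ := hy₂ y (hBT y hy) hne.2
  exact ⟨y, hy, h₁.symm.trans h₂, h₁'.symm.trans h₂'⟩

theorem card_le_three_of_forall_ne {ι : Type*} [Fintype ι] {x y : ι → V} (hx : Injective x)
    (hy : Injective y) (a b : ι → V) (h : ∀ c d, c ≠ d → y d = a c ∨ x c = b d) :
    Fintype.card ι ≤ 3 := by
  classical
  have card_fst : #{q : ι × ι | y q.2 = a q.1} ≤ Fintype.card ι :=
    card_le_card_of_injOn Prod.fst (by simp) fun q hq q' hq' heq => by
      simp only [coe_filter, mem_univ, true_and, Set.mem_ofPred_eq] at hq hq'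
      exact Prod.ext heq (hy (by rw [hq, hq', heq]))
  have card_snd : #{q : ι × ι | x q.1 = b q.2} ≤ Fintype.card ι :=
    card_le_card_of_injOn Prod.snd (by simp) fun q hq q' hq' heq => by
      simp only [coe_filter, mem_univ, true_and, Set.mem_ofPred_eq] at hq hq'
      exact Prod.ext (hx (by rw [hq, hq', heq])) heq
  have hcover : (univ : Finset ι).offDiag ⊆
      ({q : ι × ι | y q.2 = a q.1} : Finset _) ∪ ({q : ι × ι | x q.1 = b q.2} : Finset _) := by
    intro q hq
    simpa using h q.1 q.2 (mem_offDiag.1 hq).2.2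
  have := (card_le_card hcover).trans (card_union_le _ _)
  rw [offDiag_card, card_univ] at this
  by_contra! hcard
  have : Fintype.card ι * 3 ≤ Fintype.card ι * Fintype.card ι - Fintype.card ι := by
    rw [← Nat.mul_sub_one]
    exact Nat.mul_le_mul_left _ (by omega)
  omega

/-- The pattern with loop status `l` whose frame vertices are joined by the edges `c` to vertices
with the other loop status, and by two edges or none, according to `e`, to those with loop status
`l`. -/
def FramePattern.ofLinks (l e : Bool) (c : Bool × Bool) : FramePattern where
  loop := l
  fromFrame m := if m = l then e else c.1
  toFrame m := if m = l then e else c.2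
  symm_at_loop := by simp

/-- Otherwise every pattern has a nonempty trace in `s`. For the patterns `ofLinks l e c`, traces
for different `c` are disjoint, being distinguished by their edges to the vertices with loop
status other than `l`. The value of `e` then prescribes contradictory edges between the traces
for `e = false` and those for `e = true`, and the exceptions are too few to resolve this. -/
theorem embeds_of_forall_embeds_framed [Fintype V] (hV : 4 < Fintype.card V) {r s : AdjRel V}
    {N : ℕ} {p : V → Fin N} (hp : Injective p) (h : ∀ P, s ≼ framed P r p) : s ≼ r := by
  by_contra hsr
  choose S hSne hS using fun P => exists_isFrameTrace_of_embeds_framed hp (h P) hsr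
  obtain ⟨m, hm⟩ := Fintype.exists_lt_card_fiber_of_mul_lt_card (n := 2) (fun x => s x x)
    (by simpa using hV)
  let P (e : Bool) (c : Bool × Bool) : FramePattern := .ofLinks (!m) e c
  have disjoint {e e' c d} {x : V} (hx : x ∈ S (P e c)) (hx' : x ∈ S (P e' d)) : c = d := by
    have off_trace {e c} : ∀ y ∈ ({y | s y y = m} : Finset V), y ∉ S (P e c) := fun y hy hyS => by
      have : s y y = !m := (hS _).1 y hyS
      simp_all
    obtain ⟨y, hy, h₁, h₂⟩ := (hS _).exists_adj_eq_of_mem_inter (hS _) hx hx' hm off_trace off_trace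
    simp only [mem_filter, mem_univ, true_and] at hy
    simp only [P, FramePattern.ofLinks, hy, Bool.eq_not_self, if_false] at h₁ h₂
    exact Prod.ext h₁ h₂
  choose x hx using fun c => hSne (P false c)
  choose y hy using fun c => hSne (P true c)
  choose a ha using fun c => (hS (P false c)).2 (x c) (hx c)
  choose b hb using fun c => (hS (P true c)).2 (y c) (hy c)
  have hcard := card_le_three_of_forall_ne (x := x) (y := y)
    (fun c d hcd => disjoint (hx c) (hcd ▸ hx d)) (fun c d hcd => disjoint (hy c) (hcd ▸ hy d)) a b
    fun c d hcd => by
      by_contra! hne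
      have hxy := (ha c _ (fun h => hcd (disjoint h (hy d))) hne.1).1
      have hyx := (hb d _ (fun h => hcd (disjoint (hx c) h)) hne.2).2
      rw [(hS _).1 _ (hy d)] at hxy
      rw [(hS _).1 _ (hx c)] at hyx
      simp [P, FramePattern.ofLinks, hyx] at hxy
  simp at hcard

theorem FixesUpTo.apply_eq {φ : D ≃o D} (hφ : FixesUpTo 5 φ) (z : D) : φ z = z := by
  obtain hz | hz := le_or_gt (nVerts z) 5
  · exact hφ z hz
  have : NeZero (nVerts z) := ⟨by omega⟩
  obtain ⟨r, hr⟩ := exists_isoClass_eq (V := Fin (nVerts z)) (x := z) (by simp)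
  obtain ⟨s, hs⟩ := exists_isoClass_eq (V := Fin (nVerts z)) (x := φ z)
    ((nVerts_apply φ z).trans (by simp))
  have hframed (P : FramePattern) : s ≼ framed P r Fin.castSucc := by
    have hfix := hφ.isoClass_framed P r (Fin.castSucc_injective _)
      (fun w => ⟨_, Fin.castSucc_lt_last w⟩) (by simp)
    have hle : isoClass r ≤ isoClass (framed P r Fin.castSucc) :=
      isoClass_le_isoClass_iff.2 (onFun_embeds (framed P r _) .inr)
    rwa [← φ.le_iff_le, hfix, hr, ← hs, isoClass_le_isoClass_iff] at hle
  have hemb := embeds_of_forall_embeds_framed (by rw [Fintype.card_fin]; omega)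
    (Fin.castSucc_injective _) hframed
  rw [← hs, hemb.isoClass_eq rfl, hr]

end FinDigraph

open FinDigraph

/-- The order isomorphism given by an order automorphism. -/
noncomputable def IsOrderAuto.orderIso {α : Type*} [LE α] {f : α → α} (hf : IsOrderAuto f) :
    α ≃o α where
  toEquiv := .ofBijective f hf.1
  map_rel_iff' {x y} := (hf.2 x y).symm

theorem eq_of_agree_on_first_twelve_levels_general (f g : D → D) (hf : IsOrderAuto f)
    (hg : IsOrderAuto g) (h : ∀ x : D, nVerts x ≤ 5 → f x = g x) : f = g := by
  have hφ : FixesUpTo 5 (hf.orderIso.trans hg.orderIso.symm) := fun x hx =>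
    hg.orderIso.symm_apply_eq.2 (h x hx)
  exact funext fun x => hg.orderIso.symm_apply_eq.1 (hφ.apply_eq x)

/-- order automorphisms of `(D, ⊑)` agreeing on all digraphs with at most
12 vertices are equal. -/
theorem eq_of_agree_on_first_twelve_levels (f g : D → D)
    (hf : IsOrderAuto f) (hg : IsOrderAuto g)
    (h : ∀ x : D, nVerts x ≤ 12 → f x = g x) : f = g :=
  eq_of_agree_on_first_twelve_levels_general f g hf hg fun x hx => h x (hx.trans (by norm_num))
end

section
/- Every order automorphism φ of (D, ⊑) preserves the number of vertices: for every G ∈ D, the digraph φ(G) has the same number of vertices as G. In particular, for every n ≥ 1, φ maps the set D_n = {G ∈ D : G has at most n vertices} onto itself. -/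
/-!
Deleting vertices realises every smaller positive vertex count strictly below a given class, while
a proper embedding strictly increases the vertex count. Hence the height of a class in
`(D, ⊑)` is its number of vertices minus one, and heights are invariant under order automorphisms.
-/

namespace FinDigraph

variable {G H K : FinDigraph}

theorem Iso.emb (h : Iso G H) : Emb G H := by
  obtain ⟨e, he⟩ := h
  exact ⟨e.toEmbedding, he⟩

theorem Emb.trans (hGH : Emb G H) (hHK : Emb H K) : Emb G K := by
  obtain ⟨f, hf⟩ := hGH
  obtain ⟨g, hg⟩ := hHK
  exact ⟨f.trans g, fun u v => (hg (f u) (f v)).trans (hf u v)⟩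

theorem Emb.n_le (h : Emb G H) : G.n ≤ H.n := by
  obtain ⟨f, -⟩ := h
  simpa only [Fintype.card_fin] using Fintype.card_le_of_embedding f

theorem Emb.iso_of_n_le (h : Emb G H) (hn : H.n ≤ G.n) : Iso G H := by
  have card_eq : Fintype.card (Fin G.n) = Fintype.card (Fin H.n) := by
    simpa only [Fintype.card_fin] using le_antisymm h.n_le hn
  obtain ⟨f, hf⟩ := h
  have bijective : Function.Bijective f :=
    (Fintype.bijective_iff_injective_and_card f).2 ⟨f.injective, card_eq⟩
  exact ⟨Equiv.ofBijective f bijective, hf⟩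

theorem exists_emb_of_le_n {n : ℕ} (hpos : 0 < n) (hn : n ≤ G.n) :
    ∃ H : FinDigraph, Emb H G ∧ H.n = n :=
  ⟨⟨n, hpos, fun u v => G.adj (Fin.castLE hn u) (Fin.castLE hn v)⟩,
    ⟨Fin.castLEEmb hn, fun _ _ => rfl⟩, rfl⟩

end FinDigraph

theorem toD_eq_toD_iff {G H : FinDigraph} : toD G = toD H ↔ G.Iso H :=
  Quotient.eq

theorem toD_le_toD_iff {G H : FinDigraph} : toD G ≤ toD H ↔ G.Emb H := by
  constructor
  · rintro ⟨G', H', hG, hH, h⟩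
    exact ((toD_eq_toD_iff.1 hG).emb.trans h).trans (toD_eq_toD_iff.1 hH.symm).emb
  · exact fun h => ⟨G, H, rfl, rfl, h⟩

instance : PartialOrder D where
  le_refl := Quotient.ind fun G => toD_le_toD_iff.2 (FinDigraph.iso_refl G).emb
  le_trans := by
    rintro ⟨G⟩ ⟨H⟩ ⟨K⟩ hGH hHK
    exact toD_le_toD_iff.2 ((toD_le_toD_iff.1 hGH).trans (toD_le_toD_iff.1 hHK))
  le_antisymm := by
    rintro ⟨G⟩ ⟨H⟩ hGH hHG
    exact toD_eq_toD_iff.2 ((toD_le_toD_iff.1 hGH).iso_of_n_le (toD_le_toD_iff.1 hHG).n_le)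

theorem nVerts_pos (x : D) : 0 < nVerts x := by
  rcases x with ⟨G⟩
  exact G.pos

theorem nVerts_strictMono : StrictMono nVerts := by
  rintro ⟨G⟩ ⟨H⟩ hlt
  by_contra! hn
  exact hlt.ne (toD_eq_toD_iff.2 ((toD_le_toD_iff.1 hlt.le).iso_of_n_le hn))

theorem exists_lt_nVerts_eq {x : D} {n : ℕ} (hpos : 0 < n) (hn : n < nVerts x) :
    ∃ y < x, nVerts y = n := by
  rcases x with ⟨G⟩
  obtain ⟨H, hHG, rfl⟩ := FinDigraph.exists_emb_of_le_n hpos hn.le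
  exact ⟨toD H, (toD_le_toD_iff.2 hHG).lt_of_ne (ne_of_apply_ne nVerts hn.ne), rfl⟩

theorem height_eq_nVerts_sub_one (x : D) : Order.height x = (nVerts x - 1 : ℕ) := by
  have strictMono : StrictMono fun x : D => nVerts x - 1 := fun x y hxy =>
    Nat.sub_lt_sub_right (nVerts_pos x) (nVerts_strictMono hxy)
  have exists_lt (x : D) (k : ℕ) (hk : k < nVerts x - 1) : ∃ y < x, nVerts y - 1 = k := by
    obtain ⟨y, hyx, hy⟩ := exists_lt_nVerts_eq k.succ_pos (Nat.add_lt_of_lt_sub hk)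
    exact ⟨y, hyx, Nat.sub_eq_of_eq_add hy⟩
  rw [Order.height_eq_of_strictMono _ strictMono exists_lt, Order.height_nat]

theorem nVerts_orderIso_apply (φ : D ≃o D) (x : D) : nVerts (φ x) = nVerts x := by
  have height_eq := Order.height_orderIso φ x
  rw [height_eq_nVerts_sub_one, height_eq_nVerts_sub_one, Nat.cast_inj] at height_eq
  exact Nat.sub_one_cancel (nVerts_pos (φ x)) (nVerts_pos x) height_eq

/-- An order automorphism, bundled as a Mathlib order isomorphism. -/
noncomputable def IsOrderAuto.toOrderIso {α : Type*} [LE α] {f : α → α} (hf : IsOrderAuto f) :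
    α ≃o α where
  toEquiv := Equiv.ofBijective f hf.1
  map_rel_iff' := (hf.2 _ _).symm

/-- every order automorphism of `(D, ⊑)` preserves the number of vertices;
in particular it maps each `D_n` (`n ≥ 1`) onto itself. -/
theorem orderAuto_preserves_nVerts (f : D → D) (hf : IsOrderAuto f) :
    (∀ x : D, nVerts (f x) = nVerts x) ∧ ∀ n : ℕ, 1 ≤ n → f '' Dn n = Dn n := by
  have nVerts_apply (x : D) : nVerts (f x) = nVerts x := nVerts_orderIso_apply hf.toOrderIso x
  refine ⟨nVerts_apply, fun n _ => ?_⟩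
  have preimage_eq : f ⁻¹' Dn n = Dn n := by
    ext x
    simp only [Dn, Set.mem_preimage, Set.mem_ofPred_eq, nVerts_apply]
  calc
    f '' Dn n = f '' (f ⁻¹' Dn n) := by rw [preimage_eq]
    _ = Dn n := Set.image_preimage_eq _ hf.1.surjective
end
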